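/- For every n ≥ 1: M_r(4n) ≥ 2M_r(n) + 2, M_r(4n+1) ≥ 2M_r(n) + 1, M_r(4n+2) ≥ M_r(n) + M_r(n+1) + 1, and M_r(4n+3) ≥ 2M_r(n+1) + 1. Moreover, the same four inequalities hold with M_r replaced by M_{r'}. -/

import Mathlib

/-- The partial sum `Σ_w(i, n) = w(i) + w(i+1) + ⋯ + w(i+n−1)`. -/
def pSum (w : ℕ → ℤ) (i n : ℕ) : ℤ := ∑ j ∈ Finset.range n, w (i + j)

/-! Let `r'(n) = (-1)^n r(n)` and let `F` be the prefix sums of `r`. Then `F(4i) = 2 F(i)`,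
`F(4i+1) = F(i) + F(i+1)`, `F(4i+2) = 2 F(i+1)` and `F(4i+3) = 2 F(i+1) + r'(i)`, so the sum over a
window of length `4n + b` is the sum over two windows of length `n` or `n + 1`, up to a correction
by terms of `r` and `r'`; this bounds `M(4n + b)` from above. The bounds are attained as soon as
some window of maximal sum is preceded by an index where `r' = -1` and ends at an index where
`r' = 1`, and such windows of length `n` or `n + 1` give rise to one of length `4n + b`.

The two sequences have the same maxima because the prefixes of length `2^k` of `r'` and `r` occur,
reversed and with either sign, in `r` and `r'`. -/

/-- The sequence `w'` given by `w'(n) = (-1)^n w(n)`. -/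
def twist (w : ℕ → ℤ) (n : ℕ) : ℤ := (-1) ^ n * w n

/-- The recursion defining the Rudin–Shapiro sequence. -/
structure IsRudinShapiro (r : ℕ → ℤ) : Prop where
  map_zero : r 0 = 1
  map_two_mul : ∀ n, r (2 * n) = r n
  map_two_mul_add_one : ∀ n, r (2 * n + 1) = (-1) ^ n * r n

/-- `M n` is the maximal sum `M_w(n)` of `n` consecutive terms of `w`, and it is attained. -/
def IsMaxSum (w M : ℕ → ℤ) : Prop := ∀ n, IsGreatest (Set.range fun i => pSum w i n) (M n)

/-- The window of length `n` starting at `j + 1` has maximal sum and boundary values of `w'` that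
make the windows of length `4n + b` built from it maximal as well. -/
structure IsPeak (w M : ℕ → ℤ) (n j : ℕ) : Prop where
  pSum_eq : pSum w (j + 1) n = M n
  twist_before : twist w j = -1
  twist_last : twist w (j + n) = 1

lemma exists_eq_four_mul_add (p : ℕ) :
    ∃ i, p = 4 * i ∨ p = 4 * i + 1 ∨ p = 4 * i + 2 ∨ p = 4 * i + 3 :=
  ⟨p / 4, by omega⟩

lemma pSum_succ (w : ℕ → ℤ) (i n : ℕ) : pSum w i (n + 1) = pSum w i n + w (i + n) :=
  Finset.sum_range_succ _ _

lemma pSum_succ' (w : ℕ → ℤ) (i n : ℕ) : pSum w i (n + 1) = w i + pSum w (i + 1) n := by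
  simp only [pSum, Finset.sum_range_succ', add_zero, add_comm, add_left_comm]

lemma pSum_zero_add (w : ℕ → ℤ) (i n : ℕ) : pSum w 0 (i + n) = pSum w 0 i + pSum w i n := by
  simp [pSum, Finset.sum_range_add]

lemma pSum_eq_mul_of_reflect {w v : ℕ → ℤ} {c i n : ℕ} {ε : ℤ}
    (h : ∀ j < n, w (c + (n - 1 - j)) = ε * v (i + j)) : pSum w c n = ε * pSum v i n := by
  rw [pSum, ← Finset.sum_range_reflect, pSum, Finset.mul_sum]
  exact Finset.sum_congr rfl fun j hj => h j (Finset.mem_range.1 hj)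

lemma even_pSum_sub {w : ℕ → ℤ} (hw : ∀ k, Odd (w k)) (i n : ℕ) : Even (pSum w i n - n) := by
  induction n with
  | zero => simp [pSum]
  | succ n ih =>
    rw [pSum_succ]
    have := hw (i + n)
    grind

namespace IsMaxSum

variable {w M : ℕ → ℤ}

lemma pSum_le (hM : IsMaxSum w M) (i n : ℕ) : pSum w i n ≤ M n := (hM n).2 ⟨i, rfl⟩

lemma exists_pSum_eq (hM : IsMaxSum w M) (n : ℕ) : ∃ i, pSum w i n = M n := (hM n).1

lemma eq_of_forall_pSum_le (hM : IsMaxSum w M) {i n : ℕ} {b : ℤ} (hle : ∀ p, pSum w p n ≤ b)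
    (heq : pSum w i n = b) : M n = b :=
  (hM n).unique ⟨⟨i, heq⟩, Set.forall_mem_range.2 hle⟩

lemma unique {M' : ℕ → ℤ} (hM : IsMaxSum w M) (hM' : IsMaxSum w M') : M = M' :=
  funext fun n => (hM n).unique (hM' n)

lemma map_zero (hM : IsMaxSum w M) : M 0 = 0 := by
  obtain ⟨i, hi⟩ := hM.exists_pSum_eq 0
  simpa [pSum] using hi.symm

lemma succ_eq_or_eq_succ (hM : IsMaxSum w M) (hw : ∀ k, w k = 1 ∨ w k = -1) (n : ℕ) :
    M (n + 1) = M n + 1 ∨ M n = M (n + 1) + 1 := by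
  obtain ⟨i, hi⟩ := hM.exists_pSum_eq n
  obtain ⟨k, hk⟩ := hM.exists_pSum_eq (n + 1)
  have upper : M (n + 1) ≤ M n + 1 := by
    have := pSum_succ w k n
    have := hM.pSum_le k n
    have := hw (k + n)
    omega
  have lower : M n ≤ M (n + 1) + 1 := by
    have := pSum_succ w i n
    have := hM.pSum_le i (n + 1)
    have := hw (i + n)
    omega
  have odd (l : ℕ) : Odd (w l) := by rcases hw l with h | h <;> simp [h]
  have parity : Even (M n - n) := hi ▸ even_pSum_sub odd i n
  have parity_succ : Even (M (n + 1) - (n + 1 : ℕ)) := hk ▸ even_pSum_sub odd k (n + 1)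
  grind

end IsMaxSum

namespace IsRudinShapiro

variable {r M : ℕ → ℤ}

lemma map_two_mul_add_one_eq_twist (hr : IsRudinShapiro r) (n : ℕ) : r (2 * n + 1) = twist r n :=
  hr.map_two_mul_add_one n

lemma twist_two_mul (hr : IsRudinShapiro r) (n : ℕ) : twist r (2 * n) = r n := by
  simp [twist, hr.map_two_mul]

lemma twist_two_mul_add_one (hr : IsRudinShapiro r) (n : ℕ) :
    twist r (2 * n + 1) = -twist r n := by
  simp [twist, hr.map_two_mul_add_one, pow_succ]

lemma map_one (hr : IsRudinShapiro r) : r 1 = 1 := by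
  simpa [hr.map_zero] using hr.map_two_mul_add_one 0

lemma map_two (hr : IsRudinShapiro r) : r 2 = 1 := by
  simpa [hr.map_one] using hr.map_two_mul 1

lemma map_three (hr : IsRudinShapiro r) : r 3 = -1 := by
  simpa [hr.map_one] using hr.map_two_mul_add_one 1

lemma eq_one_or_eq_neg_one (hr : IsRudinShapiro r) (n : ℕ) : r n = 1 ∨ r n = -1 := by
  induction n using Nat.evenOddRec with
  | h0 => exact .inl hr.map_zero
  | h_even n ih => rwa [hr.map_two_mul]
  | h_odd n ih =>
    rw [hr.map_two_mul_add_one]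
    rcases neg_one_pow_eq_or ℤ n with h | h <;> simpa [h, neg_eq_iff_eq_neg, or_comm] using ih

lemma le_one (hr : IsRudinShapiro r) (n : ℕ) : r n ≤ 1 := by
  rcases hr.eq_one_or_eq_neg_one n with h | h <;> simp [h]

lemma neg_one_le (hr : IsRudinShapiro r) (n : ℕ) : -1 ≤ r n := by
  rcases hr.eq_one_or_eq_neg_one n with h | h <;> simp [h]

lemma twist_le_one (hr : IsRudinShapiro r) (n : ℕ) : twist r n ≤ 1 :=
  hr.map_two_mul_add_one_eq_twist n ▸ hr.le_one _

lemma neg_one_le_twist (hr : IsRudinShapiro r) (n : ℕ) : -1 ≤ twist r n :=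
  hr.map_two_mul_add_one_eq_twist n ▸ hr.neg_one_le _

lemma map_four_mul (hr : IsRudinShapiro r) (n : ℕ) : r (4 * n) = r n := by
  rw [show 4 * n = 2 * (2 * n) by ring, hr.map_two_mul, hr.map_two_mul]

lemma map_four_mul_add_one (hr : IsRudinShapiro r) (n : ℕ) : r (4 * n + 1) = r n := by
  rw [show 4 * n + 1 = 2 * (2 * n) + 1 by ring, hr.map_two_mul_add_one_eq_twist, hr.twist_two_mul]

lemma map_four_mul_add_two (hr : IsRudinShapiro r) (n : ℕ) : r (4 * n + 2) = twist r n := by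
  rw [show 4 * n + 2 = 2 * (2 * n + 1) by ring, hr.map_two_mul, hr.map_two_mul_add_one_eq_twist]

lemma map_four_mul_add_three (hr : IsRudinShapiro r) (n : ℕ) : r (4 * n + 3) = -twist r n := by
  rw [show 4 * n + 3 = 2 * (2 * n + 1) + 1 by ring, hr.map_two_mul_add_one_eq_twist,
    hr.twist_two_mul_add_one]

lemma twist_four_mul (hr : IsRudinShapiro r) (n : ℕ) : twist r (4 * n) = r n := by
  rw [show 4 * n = 2 * (2 * n) by ring, hr.twist_two_mul, hr.map_two_mul]

lemma twist_four_mul_add_two (hr : IsRudinShapiro r) (n : ℕ) :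
    twist r (4 * n + 2) = twist r n := by
  rw [show 4 * n + 2 = 2 * (2 * n + 1) by ring, hr.twist_two_mul, hr.map_two_mul_add_one_eq_twist]

lemma twist_four_mul_add_three (hr : IsRudinShapiro r) (n : ℕ) :
    twist r (4 * n + 3) = twist r n := by
  rw [show 4 * n + 3 = 2 * (2 * n + 1) + 1 by ring, hr.twist_two_mul_add_one,
    hr.twist_two_mul_add_one, neg_neg]

lemma pSum_zero_four_mul (hr : IsRudinShapiro r) (n : ℕ) :
    pSum r 0 (4 * n) = 2 * pSum r 0 n := by
  induction n with
  | zero => simp [pSum]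
  | succ n ih =>
    simp only [mul_add_one, pSum_succ, zero_add, ih, hr.map_four_mul, hr.map_four_mul_add_one,
      hr.map_four_mul_add_two, hr.map_four_mul_add_three]
    ring

lemma pSum_zero_four_mul_add_one (hr : IsRudinShapiro r) (n : ℕ) :
    pSum r 0 (4 * n + 1) = pSum r 0 n + pSum r 0 (n + 1) := by
  simp only [pSum_succ, zero_add, hr.pSum_zero_four_mul, hr.map_four_mul]
  ring

lemma pSum_zero_four_mul_add_two (hr : IsRudinShapiro r) (n : ℕ) :
    pSum r 0 (4 * n + 2) = 2 * pSum r 0 (n + 1) := by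
  rw [pSum_succ, hr.pSum_zero_four_mul_add_one, zero_add, hr.map_four_mul_add_one, pSum_succ,
    zero_add]
  ring

lemma pSum_zero_four_mul_add_three (hr : IsRudinShapiro r) (n : ℕ) :
    pSum r 0 (4 * n + 3) = 2 * pSum r 0 (n + 1) + twist r n := by
  rw [pSum_succ, hr.pSum_zero_four_mul_add_two, zero_add, hr.map_four_mul_add_two]

section Windows

variable (hr : IsRudinShapiro r) (i n : ℕ)
include hr

lemma pSum_four_mul_add_three_four_mul :
    pSum r (4 * i + 3) (4 * n) = 2 * pSum r (i + 1) n + twist r (i + n) - twist r i := by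
  grind [pSum_zero_add, hr.pSum_zero_four_mul_add_three i, hr.pSum_zero_four_mul_add_three (i + n)]

lemma pSum_four_mul_add_three_four_mul_add_one :
    pSum r (4 * i + 3) (4 * n + 1) = 2 * pSum r (i + 1) n - twist r i := by
  grind [pSum_zero_add, hr.pSum_zero_four_mul_add_three i, hr.pSum_zero_four_mul (i + n + 1)]

lemma pSum_four_mul_add_one_four_mul_add_two :
    pSum r (4 * i + 1) (4 * n + 2) = pSum r i (n + 1) + pSum r (i + 1) n + twist r (i + n) := by
  grind [pSum_zero_add, hr.pSum_zero_four_mul_add_one i, hr.pSum_zero_four_mul_add_three (i + n)]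

lemma pSum_four_mul_add_three_four_mul_add_two :
    pSum r (4 * i + 3) (4 * n + 2) = pSum r (i + 1) n + pSum r (i + 1) (n + 1) - twist r i := by
  grind [pSum_zero_add, hr.pSum_zero_four_mul_add_three i,
    hr.pSum_zero_four_mul_add_one (i + n + 1)]

lemma pSum_four_mul_four_mul_add_three :
    pSum r (4 * i) (4 * n + 3) = 2 * pSum r i (n + 1) + twist r (i + n) := by
  grind [pSum_zero_add, hr.pSum_zero_four_mul i, hr.pSum_zero_four_mul_add_three (i + n)]

end Windows

lemma pSum_four_mul_le (hr : IsRudinShapiro r) (hM : IsMaxSum r M) (p n : ℕ) :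
    pSum r p (4 * n) ≤ 2 * M n + 2 := by
  obtain ⟨i, rfl | rfl | rfl | rfl⟩ := exists_eq_four_mul_add p
  · have : pSum r (4 * i) (4 * n) = 2 * pSum r i n := by
      grind [pSum_zero_add, hr.pSum_zero_four_mul i, hr.pSum_zero_four_mul (i + n)]
    linarith [hM.pSum_le i n]
  · have : pSum r (4 * i + 1) (4 * n) = pSum r i n + pSum r (i + 1) n := by
      grind [pSum_zero_add, hr.pSum_zero_four_mul_add_one i, hr.pSum_zero_four_mul_add_one (i + n)]
    linarith [hM.pSum_le i n, hM.pSum_le (i + 1) n]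
  · have : pSum r (4 * i + 2) (4 * n) = 2 * pSum r (i + 1) n := by
      grind [pSum_zero_add, hr.pSum_zero_four_mul_add_two i, hr.pSum_zero_four_mul_add_two (i + n)]
    linarith [hM.pSum_le (i + 1) n]
  · have := hr.pSum_four_mul_add_three_four_mul i n
    linarith [hM.pSum_le (i + 1) n, hr.neg_one_le_twist i, hr.twist_le_one (i + n)]

lemma pSum_four_mul_add_one_le (hr : IsRudinShapiro r) (hM : IsMaxSum r M) (p n : ℕ) :
    pSum r p (4 * n + 1) ≤ 2 * M n + 1 := by
  obtain ⟨i, rfl | rfl | rfl | rfl⟩ := exists_eq_four_mul_add p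
  · have : pSum r (4 * i) (4 * n + 1) = 2 * pSum r i n + r (i + n) := by
      grind [pSum_zero_add, pSum_succ, hr.pSum_zero_four_mul i,
        hr.pSum_zero_four_mul_add_one (i + n)]
    linarith [hM.pSum_le i n, hr.le_one (i + n)]
  · have : pSum r (4 * i + 1) (4 * n + 1) = 2 * pSum r (i + 1) n + r i := by
      grind [pSum_zero_add, pSum_succ, hr.pSum_zero_four_mul_add_one i,
        hr.pSum_zero_four_mul_add_two (i + n)]
    linarith [hM.pSum_le (i + 1) n, hr.le_one i]
  · have : pSum r (4 * i + 2) (4 * n + 1) = 2 * pSum r (i + 1) n + twist r (i + n) := by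
      grind [pSum_zero_add, hr.pSum_zero_four_mul_add_two i,
        hr.pSum_zero_four_mul_add_three (i + n)]
    linarith [hM.pSum_le (i + 1) n, hr.twist_le_one (i + n)]
  · have := hr.pSum_four_mul_add_three_four_mul_add_one i n
    linarith [hM.pSum_le (i + 1) n, hr.neg_one_le_twist i]

lemma pSum_four_mul_add_two_le (hr : IsRudinShapiro r) (hM : IsMaxSum r M) (p n : ℕ) :
    pSum r p (4 * n + 2) ≤ M n + M (n + 1) + 1 := by
  have hstep := hM.succ_eq_or_eq_succ hr.eq_one_or_eq_neg_one n
  obtain ⟨i, rfl | rfl | rfl | rfl⟩ := exists_eq_four_mul_add p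
  · have : pSum r (4 * i) (4 * n + 2) = 2 * pSum r i (n + 1) := by
      grind [pSum_zero_add, hr.pSum_zero_four_mul i, hr.pSum_zero_four_mul_add_two (i + n)]
    have := hM.pSum_le i (n + 1)
    omega
  · have := hr.pSum_four_mul_add_one_four_mul_add_two i n
    linarith [hM.pSum_le i (n + 1), hM.pSum_le (i + 1) n, hr.twist_le_one (i + n)]
  · have : pSum r (4 * i + 2) (4 * n + 2) = 2 * pSum r (i + 1) n := by
      grind [pSum_zero_add, hr.pSum_zero_four_mul_add_two i, hr.pSum_zero_four_mul (i + n + 1)]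
    have := hM.pSum_le (i + 1) n
    omega
  · have := hr.pSum_four_mul_add_three_four_mul_add_two i n
    linarith [hM.pSum_le (i + 1) n, hM.pSum_le (i + 1) (n + 1), hr.neg_one_le_twist i]

lemma pSum_four_mul_add_three_le (hr : IsRudinShapiro r) (hM : IsMaxSum r M) (p n : ℕ) :
    pSum r p (4 * n + 3) ≤ 2 * M (n + 1) + 1 := by
  obtain ⟨i, rfl | rfl | rfl | rfl⟩ := exists_eq_four_mul_add p
  · have := hr.pSum_four_mul_four_mul_add_three i n
    linarith [hM.pSum_le i (n + 1), hr.twist_le_one (i + n)]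
  · have : pSum r (4 * i + 1) (4 * n + 3) = 2 * pSum r i (n + 1) - r i := by
      grind [pSum_zero_add, pSum_succ, hr.pSum_zero_four_mul_add_one i,
        hr.pSum_zero_four_mul (i + n + 1)]
    linarith [hM.pSum_le i (n + 1), hr.neg_one_le i]
  · have : pSum r (4 * i + 2) (4 * n + 3) = 2 * pSum r (i + 1) (n + 1) - r (i + n + 1) := by
      grind [pSum_zero_add, pSum_succ, hr.pSum_zero_four_mul_add_two i,
        hr.pSum_zero_four_mul_add_one (i + n + 1)]
    linarith [hM.pSum_le (i + 1) (n + 1), hr.neg_one_le (i + n + 1)]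
  · have : pSum r (4 * i + 3) (4 * n + 3) = 2 * pSum r (i + 1) (n + 1) - twist r i := by
      grind [pSum_zero_add, hr.pSum_zero_four_mul_add_three i,
        hr.pSum_zero_four_mul_add_two (i + n + 1)]
    linarith [hM.pSum_le (i + 1) (n + 1), hr.neg_one_le_twist i]

end IsRudinShapiro

namespace IsPeak

variable {r M : ℕ → ℤ} {n j : ℕ}

lemma pSum_four_mul (h : IsPeak r M n j) (hr : IsRudinShapiro r) :
    pSum r (4 * j + 3) (4 * n) = 2 * M n + 2 := by
  rw [hr.pSum_four_mul_add_three_four_mul, h.pSum_eq, h.twist_before, h.twist_last]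
  ring

lemma maxSum_four_mul (h : IsPeak r M n j) (hr : IsRudinShapiro r) (hM : IsMaxSum r M) :
    M (4 * n) = 2 * M n + 2 :=
  hM.eq_of_forall_pSum_le (fun p => hr.pSum_four_mul_le hM p n) (h.pSum_four_mul hr)

lemma four_mul (h : IsPeak r M n j) (hr : IsRudinShapiro r) (hM : IsMaxSum r M) :
    IsPeak r M (4 * n) (4 * j + 2) where
  pSum_eq := (h.pSum_four_mul hr).trans (h.maxSum_four_mul hr hM).symm
  twist_before := by rw [hr.twist_four_mul_add_two, h.twist_before]
  twist_last := by
    rw [show 4 * j + 2 + 4 * n = 4 * (j + n) + 2 by ring, hr.twist_four_mul_add_two, h.twist_last]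

lemma pSum_four_mul_add_one (h : IsPeak r M n j) (hr : IsRudinShapiro r) :
    pSum r (4 * j + 3) (4 * n + 1) = 2 * M n + 1 := by
  rw [hr.pSum_four_mul_add_three_four_mul_add_one, h.pSum_eq, h.twist_before]
  ring

lemma maxSum_four_mul_add_one (h : IsPeak r M n j) (hr : IsRudinShapiro r) (hM : IsMaxSum r M) :
    M (4 * n + 1) = 2 * M n + 1 :=
  hM.eq_of_forall_pSum_le (fun p => hr.pSum_four_mul_add_one_le hM p n)
    (h.pSum_four_mul_add_one hr)

lemma four_mul_add_one (h : IsPeak r M n j) (hr : IsRudinShapiro r) (hM : IsMaxSum r M) :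
    IsPeak r M (4 * n + 1) (4 * j + 2) where
  pSum_eq := (h.pSum_four_mul_add_one hr).trans (h.maxSum_four_mul_add_one hr hM).symm
  twist_before := by rw [hr.twist_four_mul_add_two, h.twist_before]
  twist_last := by
    rw [show 4 * j + 2 + (4 * n + 1) = 4 * (j + n) + 3 by ring, hr.twist_four_mul_add_three,
      h.twist_last]

lemma map_last_of_lt (h : IsPeak r M (n + 1) j) (hr : IsRudinShapiro r) (hM : IsMaxSum r M)
    (hlt : M n < M (n + 1)) : r (j + n + 1) = 1 := by
  have hsum := pSum_succ r (j + 1) n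
  rw [h.pSum_eq, add_right_comm] at hsum
  have := hM.pSum_le (j + 1) n
  have := hr.eq_one_or_eq_neg_one (j + n + 1)
  omega

lemma map_before_of_gt (h : IsPeak r M n j) (hr : IsRudinShapiro r) (hM : IsMaxSum r M)
    (hgt : M (n + 1) < M n) : r j = -1 := by
  have hsum := pSum_succ' r j n
  rw [h.pSum_eq] at hsum
  have := hM.pSum_le j (n + 1)
  have := hr.eq_one_or_eq_neg_one j
  omega

lemma pSum_four_mul_add_two_of_lt (h : IsPeak r M (n + 1) j) (hr : IsRudinShapiro r)
    (hM : IsMaxSum r M) (hlt : M n < M (n + 1)) :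
    pSum r (4 * j + 3) (4 * n + 2) = M n + M (n + 1) + 1 := by
  have hsum := pSum_succ r (j + 1) n
  rw [h.pSum_eq, add_right_comm, h.map_last_of_lt hr hM hlt] at hsum
  have := hM.succ_eq_or_eq_succ hr.eq_one_or_eq_neg_one n
  rw [hr.pSum_four_mul_add_three_four_mul_add_two, h.pSum_eq, h.twist_before]
  omega

lemma maxSum_four_mul_add_two_of_lt (h : IsPeak r M (n + 1) j) (hr : IsRudinShapiro r)
    (hM : IsMaxSum r M) (hlt : M n < M (n + 1)) : M (4 * n + 2) = M n + M (n + 1) + 1 :=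
  hM.eq_of_forall_pSum_le (fun p => hr.pSum_four_mul_add_two_le hM p n)
    (h.pSum_four_mul_add_two_of_lt hr hM hlt)

lemma four_mul_add_two_of_lt (h : IsPeak r M (n + 1) j) (hr : IsRudinShapiro r)
    (hM : IsMaxSum r M) (hlt : M n < M (n + 1)) : IsPeak r M (4 * n + 2) (4 * j + 2) where
  pSum_eq := (h.pSum_four_mul_add_two_of_lt hr hM hlt).trans
    (h.maxSum_four_mul_add_two_of_lt hr hM hlt).symm
  twist_before := by rw [hr.twist_four_mul_add_two, h.twist_before]
  twist_last := by
    rw [show 4 * j + 2 + (4 * n + 2) = 4 * (j + n + 1) by ring, hr.twist_four_mul,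
      h.map_last_of_lt hr hM hlt]

lemma pSum_four_mul_add_two_of_gt (h : IsPeak r M n j) (hr : IsRudinShapiro r)
    (hM : IsMaxSum r M) (hgt : M (n + 1) < M n) :
    pSum r (4 * j + 1) (4 * n + 2) = M n + M (n + 1) + 1 := by
  have := hM.succ_eq_or_eq_succ hr.eq_one_or_eq_neg_one n
  rw [hr.pSum_four_mul_add_one_four_mul_add_two, pSum_succ', h.pSum_eq,
    h.map_before_of_gt hr hM hgt, h.twist_last]
  omega

lemma maxSum_four_mul_add_two_of_gt (h : IsPeak r M n j) (hr : IsRudinShapiro r)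
    (hM : IsMaxSum r M) (hgt : M (n + 1) < M n) : M (4 * n + 2) = M n + M (n + 1) + 1 :=
  hM.eq_of_forall_pSum_le (fun p => hr.pSum_four_mul_add_two_le hM p n)
    (h.pSum_four_mul_add_two_of_gt hr hM hgt)

lemma four_mul_add_two_of_gt (h : IsPeak r M n j) (hr : IsRudinShapiro r)
    (hM : IsMaxSum r M) (hgt : M (n + 1) < M n) : IsPeak r M (4 * n + 2) (4 * j) where
  pSum_eq := (h.pSum_four_mul_add_two_of_gt hr hM hgt).trans
    (h.maxSum_four_mul_add_two_of_gt hr hM hgt).symm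
  twist_before := by rw [hr.twist_four_mul, h.map_before_of_gt hr hM hgt]
  twist_last := by
    rw [show 4 * j + (4 * n + 2) = 4 * (j + n) + 2 by ring, hr.twist_four_mul_add_two,
      h.twist_last]

lemma pSum_four_mul_add_three (h : IsPeak r M (n + 1) j) (hr : IsRudinShapiro r) :
    pSum r (4 * j + 4) (4 * n + 3) = 2 * M (n + 1) + 1 := by
  have hwindow := hr.pSum_four_mul_four_mul_add_three (j + 1) n
  rwa [h.pSum_eq, add_right_comm j 1 n, add_assoc j n 1, h.twist_last] at hwindow

lemma maxSum_four_mul_add_three (h : IsPeak r M (n + 1) j) (hr : IsRudinShapiro r)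
    (hM : IsMaxSum r M) : M (4 * n + 3) = 2 * M (n + 1) + 1 :=
  hM.eq_of_forall_pSum_le (fun p => hr.pSum_four_mul_add_three_le hM p n)
    (h.pSum_four_mul_add_three hr)

lemma four_mul_add_three (h : IsPeak r M (n + 1) j) (hr : IsRudinShapiro r) (hM : IsMaxSum r M) :
    IsPeak r M (4 * n + 3) (4 * j + 3) where
  pSum_eq := (h.pSum_four_mul_add_three hr).trans (h.maxSum_four_mul_add_three hr hM).symm
  twist_before := by rw [hr.twist_four_mul_add_three, h.twist_before]
  twist_last := by
    rw [show 4 * j + 3 + (4 * n + 3) = 4 * (j + (n + 1)) + 2 by ring, hr.twist_four_mul_add_two,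
      h.twist_last]

end IsPeak

namespace IsRudinShapiro

variable {r M : ℕ → ℤ}

lemma maxSum_one (hr : IsRudinShapiro r) (hM : IsMaxSum r M) : M 1 = 1 :=
  hM.eq_of_forall_pSum_le (i := 0) (fun p => by simpa [pSum] using hr.le_one p)
    (by simp [pSum, hr.map_zero])

lemma isPeak_one (hr : IsRudinShapiro r) (hM : IsMaxSum r M) : IsPeak r M 1 1 where
  pSum_eq := by simp [pSum, hr.maxSum_one hM, hr.map_two]
  twist_before := by simp [twist, hr.map_one]
  twist_last := by simp [twist, hr.map_two]

lemma exists_isPeak (hr : IsRudinShapiro r) (hM : IsMaxSum r M) {n : ℕ} (hn : 1 ≤ n) :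
    ∃ j, IsPeak r M n j := by
  induction n using Nat.strong_induction_on with
  | _ N ih =>
    obtain ⟨n, rfl | rfl | rfl | rfl⟩ := exists_eq_four_mul_add N
    · obtain ⟨j, hj⟩ := ih n (by omega) (by omega)
      exact ⟨_, hj.four_mul hr hM⟩
    · rcases Nat.eq_zero_or_pos n with rfl | hpos
      · exact ⟨1, hr.isPeak_one hM⟩
      · obtain ⟨j, hj⟩ := ih n (by omega) hpos
        exact ⟨_, hj.four_mul_add_one hr hM⟩
    · rcases hM.succ_eq_or_eq_succ hr.eq_one_or_eq_neg_one n with hup | hdown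
      · obtain ⟨j, hj⟩ := ih (n + 1) (by omega) (by omega)
        exact ⟨_, hj.four_mul_add_two_of_lt hr hM (by omega)⟩
      · have hpos : n ≠ 0 := by
          rintro rfl
          simp [hM.map_zero, hr.maxSum_one hM] at hdown
        obtain ⟨j, hj⟩ := ih n (by omega) (by omega)
        exact ⟨_, hj.four_mul_add_two_of_gt hr hM (by omega)⟩
    · obtain ⟨j, hj⟩ := ih (n + 1) (by omega) (by omega)
      exact ⟨_, hj.four_mul_add_three hr hM⟩

lemma exists_reversed_prefix (hr : IsRudinShapiro r) (k : ℕ) (ε : ℤˣ) :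
    ∃ m, ∀ x y, x + y + 1 = 2 ^ k →
      r (m + y) = ε * twist r x ∧ twist r (m + y) = -ε * r x := by
  induction k generalizing ε with
  | zero =>
    rcases Int.units_eq_one_or ε with rfl | rfl
    · refine ⟨1, fun x y hxy => ?_⟩
      obtain ⟨rfl, rfl⟩ : x = 0 ∧ y = 0 := by omega
      simp [twist, hr.map_zero, hr.map_one]
    · refine ⟨3, fun x y hxy => ?_⟩
      obtain ⟨rfl, rfl⟩ : x = 0 ∧ y = 0 := by omega
      simp [twist, hr.map_zero, hr.map_three, pow_succ]
  | succ k ih =>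
    obtain ⟨m, hm⟩ := ih (-ε)
    refine ⟨2 * m, fun x y hxy => ?_⟩
    rw [pow_succ] at hxy
    obtain ⟨a, rfl | rfl⟩ := x.even_or_odd'
    · obtain ⟨b, rfl⟩ : ∃ b, y = 2 * b + 1 := ⟨y / 2, by omega⟩
      obtain ⟨-, htwist⟩ := hm a b (by omega)
      rw [← add_assoc, ← mul_add, hr.map_two_mul_add_one_eq_twist, hr.twist_two_mul_add_one,
        hr.twist_two_mul, hr.map_two_mul, htwist]
      simp
    · obtain ⟨b, rfl⟩ : ∃ b, y = 2 * b := ⟨y / 2, by omega⟩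
      obtain ⟨hmap, -⟩ := hm a b (by omega)
      rw [← mul_add, hr.map_two_mul, hr.twist_two_mul, hr.twist_two_mul_add_one,
        hr.map_two_mul_add_one_eq_twist, hmap]
      simp

lemma exists_pSum_reversed (hr : IsRudinShapiro r) (i n : ℕ) (ε : ℤˣ) :
    ∃ c, pSum r c n = ε * pSum (twist r) i n ∧ pSum (twist r) c n = -ε * pSum r i n := by
  obtain ⟨m, hm⟩ := hr.exists_reversed_prefix (i + n) ε
  have hlt : i + n < 2 ^ (i + n) := Nat.lt_two_pow_self
  have hreflect (j : ℕ) (hj : j < n) :=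
    hm (i + j) (2 ^ (i + n) - (i + n) + (n - 1 - j)) (by omega)
  simp only [← add_assoc m] at hreflect
  exact ⟨_, pSum_eq_mul_of_reflect fun j hj => (hreflect j hj).1,
    pSum_eq_mul_of_reflect fun j hj => (hreflect j hj).2⟩

lemma range_pSum_twist (hr : IsRudinShapiro r) (n : ℕ) :
    (Set.range fun i => pSum (twist r) i n) = Set.range fun i => pSum r i n := by
  apply Set.Subset.antisymm
  · rintro _ ⟨i, rfl⟩
    obtain ⟨c, hc, -⟩ := hr.exists_pSum_reversed i n 1
    exact ⟨c, by simpa using hc⟩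
  · rintro _ ⟨i, rfl⟩
    obtain ⟨c, -, hc⟩ := hr.exists_pSum_reversed i n (-1)
    exact ⟨c, by simpa using hc⟩

lemma isMaxSum_twist_iff (hr : IsRudinShapiro r) : IsMaxSum (twist r) M ↔ IsMaxSum r M := by
  simp only [IsMaxSum, hr.range_pSum_twist]

end IsRudinShapiro

theorem max_sum_lower_bounds_general {r M M' : ℕ → ℤ} (hr : IsRudinShapiro r)
    (hM : IsMaxSum r M) (hM' : IsMaxSum (twist r) M') {n : ℕ} (hn : 1 ≤ n) :
    M' = M ∧
    M (4 * n) = 2 * M n + 2 ∧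
    M (4 * n + 1) = 2 * M n + 1 ∧
    M (4 * n + 2) = M n + M (n + 1) + 1 ∧
    M (4 * n + 3) = 2 * M (n + 1) + 1 := by
  obtain ⟨j, hj⟩ := hr.exists_isPeak hM hn
  obtain ⟨k, hk⟩ := hr.exists_isPeak hM (Nat.le_add_left 1 n)
  refine ⟨(hr.isMaxSum_twist_iff.1 hM').unique hM, hj.maxSum_four_mul hr hM,
    hj.maxSum_four_mul_add_one hr hM, ?_, hk.maxSum_four_mul_add_three hr hM⟩
  rcases hM.succ_eq_or_eq_succ hr.eq_one_or_eq_neg_one n with hup | hdown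
  · exact hk.maxSum_four_mul_add_two_of_lt hr hM (by omega)
  · exact hj.maxSum_four_mul_add_two_of_gt hr hM (by omega)

/-- **Statement.** Bounds for the maximal sums of consecutive terms of the
Rudin–Shapiro sequence `r` and of the related sequence `r'(n) = (−1)^n r(n)`. -/
theorem max_sum_lower_bounds
    (r : ℕ → ℤ) (hr0 : r 0 = 1)
    (hre : ∀ n, r (2 * n) = r n)
    (hro : ∀ n, r (2 * n + 1) = (-1) ^ n * r n)
    (M M' : ℕ → ℤ)
    (hM : ∀ n, IsGreatest (Set.range fun i => pSum r i n) (M n))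
    (hM' : ∀ n, IsGreatest (Set.range fun i => pSum (fun k => (-1) ^ k * r k) i n) (M' n))
    (n : ℕ) (hn : 1 ≤ n) :
    (M (4 * n) ≥ 2 * M n + 2 ∧
     M (4 * n + 1) ≥ 2 * M n + 1 ∧
     M (4 * n + 2) ≥ M n + M (n + 1) + 1 ∧
     M (4 * n + 3) ≥ 2 * M (n + 1) + 1) ∧
    (M' (4 * n) ≥ 2 * M' n + 2 ∧
     M' (4 * n + 1) ≥ 2 * M' n + 1 ∧
     M' (4 * n + 2) ≥ M' n + M' (n + 1) + 1 ∧
     M' (4 * n + 3) ≥ 2 * M' (n + 1) + 1) := by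
  obtain ⟨rfl, h₀, h₁, h₂, h₃⟩ := max_sum_lower_bounds_general ⟨hr0, hre, hro⟩ hM hM' hn
  exact ⟨⟨h₀.ge, h₁.ge, h₂.ge, h₃.ge⟩, h₀.ge, h₁.ge, h₂.ge, h₃.ge⟩
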